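/- arXiv:2505.22365 — 5 statements merged into one kernel-verified Lean document; each statement's English description precedes it below -/
import Mathlib

section
/- Let G ⊆ ℝ^N be a closed (N−1)-Ahlfors-regular set, let ε > 0, and assume the following Carleson bound: there is a constant C₁ > 0 such that for every x ∈ G and every r > 0, ∫₀^r ∫_{G ∩ B_r(x)} 1_{{β(y,t) > ε}} dℋ^{N−1}(y) dt/t ≤ C₁ r^{N−1}. Let Γ ⊆ G be a Borel set satisfying the lower Ahlfors-regularity estimate ℋ^{N−1}(Γ ∩ B_ρ(x)) ≥ C_Γ ρ^{N−1} for all x ∈ Γ and ρ ∈ (0, r₀), with constants C_Γ, r₀ > 0. Then there exists a constant a ∈ (0,1), depending only on C₁ and C_Γ, such that for every x ∈ Γ and every r ∈ (0, r₀/2) there exist y ∈ Γ ∩ B_r(x) and t ∈ (a r, r) with β(y,t) ≤ ε. -/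
open MeasureTheory Metric Set
open scoped RealInnerProductSpace ENNReal NNReal

/-- The bilateral flatness `β(x,t)` of the set `G` at the point `x` at scale `t`:
the infimum, over all affine hyperplanes `P` (described by a point `p` and a unit
normal `v`), of
`sup_{y ∈ G ∩ B_t(x)} t⁻¹ dist(y, P) + sup_{z ∈ P ∩ B_t(x)} t⁻¹ dist(z, G)`. -/
noncomputable def bilateralFlatness {N : ℕ} (G : Set (EuclideanSpace ℝ (Fin N)))
    (x : EuclideanSpace ℝ (Fin N)) (t : ℝ) : ℝ :=
  sInf { s : ℝ | ∃ p v : EuclideanSpace ℝ (Fin N), ‖v‖ = 1 ∧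
    s = (⨆ y : (G ∩ ball x t : Set (EuclideanSpace ℝ (Fin N))),
          t⁻¹ * infDist (y : EuclideanSpace ℝ (Fin N)) {z | ⟪z - p, v⟫ = 0})
      + (⨆ z : ({z | ⟪z - p, v⟫ = 0} ∩ ball x t : Set (EuclideanSpace ℝ (Fin N))),
          t⁻¹ * infDist (z : EuclideanSpace ℝ (Fin N)) G) }

/-!
The measure `dt/t` gives the interval `(a r, r)` the mass `log (1/a)`, whatever `r` is. If every
`y ∈ Γ ∩ B_r(x)` were non-flat at every scale `t ∈ (a r, r)`, the Carleson integral would be at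
least `log (1/a) * C_Γ * r ^ (N - 1)`, which exceeds `C₁ * r ^ (N - 1)` as soon as
`log (1/a) > C₁ / C_Γ`.
-/

theorem lintegral_Ioo_ofReal_inv {s r : ℝ} (hs : 0 < s) (hsr : s ≤ r) :
    ∫⁻ t in Ioo s r, (ENNReal.ofReal t)⁻¹ = ENNReal.ofReal (Real.log (r / s)) := by
  have pos_of_mem {t : ℝ} (ht : t ∈ Ioo s r) : 0 < t := hs.trans ht.1
  have integrable : IntegrableOn (fun t : ℝ ↦ t⁻¹) (Ioo s r) :=
    (intervalIntegrable_iff_integrableOn_Ioo_of_le hsr).1 <|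
      intervalIntegrable_inv_iff.2 <|
        .inr (notMem_uIcc_of_lt hs (hs.trans_le hsr))
  calc ∫⁻ t in Ioo s r, (ENNReal.ofReal t)⁻¹
      = ∫⁻ t in Ioo s r, ENNReal.ofReal t⁻¹ :=
        setLIntegral_congr_fun measurableSet_Ioo
          fun _ ht ↦ (ENNReal.ofReal_inv_of_pos (pos_of_mem ht)).symm
    _ = ENNReal.ofReal (∫ t in Ioo s r, t⁻¹) :=
        (ofReal_integral_eq_lintegral_ofReal integrable <|
          ae_restrict_of_forall_mem measurableSet_Ioo
            fun _ ht ↦ (inv_pos.2 (pos_of_mem ht)).le).symm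
    _ = ENNReal.ofReal (Real.log (r / s)) := by
        rw [← integral_Ioc_eq_integral_Ioo, ← intervalIntegral.integral_of_le hsr,
          integral_inv_of_pos hs (hs.trans_le hsr)]

theorem exists_mem_Ioo_lt_of_lintegral_div_lt {f : ℝ → ℝ≥0∞} {c : ℝ≥0∞} {s r : ℝ}
    (hs : 0 < s) (hsr : s ≤ r)
    (hf : ∫⁻ t in Ioo s r, f t / ENNReal.ofReal t < c * ENNReal.ofReal (Real.log (r / s))) :
    ∃ t ∈ Ioo s r, f t < c := by
  by_contra! hc
  refine hf.not_ge ?_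
  calc c * ENNReal.ofReal (Real.log (r / s))
      = ∫⁻ t in Ioo s r, c / ENNReal.ofReal t := by
        rw [← lintegral_Ioo_ofReal_inv hs hsr, ← lintegral_const_mul c (by fun_prop)]
        simp only [div_eq_mul_inv]
    _ ≤ ∫⁻ t in Ioo s r, f t / ENNReal.ofReal t :=
        setLIntegral_mono' measurableSet_Ioo fun t ht ↦ ENNReal.div_le_div_right (hc t ht) _

theorem exists_mem_notMem_of_lintegral_measure_div_lt {X : Type*} [MeasurableSpace X]
    {μ : Measure X} {S : Set X} {bad : ℝ → Set X} {s r : ℝ} (hs : 0 < s) (hsr : s ≤ r)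
    (h : ∫⁻ t in Ioo s r, μ (bad t) / ENNReal.ofReal t <
      μ S * ENNReal.ofReal (Real.log (r / s))) :
    ∃ y ∈ S, ∃ t ∈ Ioo s r, y ∉ bad t := by
  obtain ⟨t, ht, hlt⟩ := exists_mem_Ioo_lt_of_lintegral_div_lt hs hsr h
  obtain ⟨y, hyS, hy⟩ := not_subset.1 fun hsub ↦ (measure_mono hsub).not_gt hlt
  exact ⟨y, hyS, t, ht, hy⟩

theorem flat_ball_from_carleson_general {X : Type*} [PseudoMetricSpace X] [MeasurableSpace X]
    {μ : Measure X} {β : X → ℝ → ℝ} {G Γ : Set X} {a C₁ CΓ d ε r₀ : ℝ}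
    (hC₁ : 0 ≤ C₁) (hCΓ : 0 < CΓ) (ha₀ : 0 < a) (ha : a < Real.exp (-(C₁ / CΓ)))
    (carleson : ∀ x ∈ G, ∀ r : ℝ, 0 < r →
      ∫⁻ t in Ioo 0 r, μ {y | y ∈ G ∩ ball x r ∧ ε < β y t} / ENNReal.ofReal t ≤
        ENNReal.ofReal (C₁ * r ^ d))
    (hΓG : Γ ⊆ G)
    (lower : ∀ x ∈ Γ, ∀ ρ : ℝ, 0 < ρ → ρ < r₀ →
      ENNReal.ofReal (CΓ * ρ ^ d) ≤ μ (Γ ∩ ball x ρ))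
    {x : X} (hx : x ∈ Γ) {r : ℝ} (hr : 0 < r) (hr₀ : r < r₀) :
    ∃ y ∈ Γ ∩ ball x r, ∃ t : ℝ, a * r < t ∧ t < r ∧ β y t ≤ ε := by
  have ha₁ : a ≤ 1 := ha.le.trans (Real.exp_le_one_iff.2 (neg_nonpos.2 (by positivity)))
  have log_eq : Real.log (r / (a * r)) = -Real.log a := by
    rw [div_mul_cancel_right₀ hr.ne', Real.log_inv]
  have mass_lt : C₁ * r ^ d < CΓ * r ^ d * -Real.log a := by
    have : C₁ / CΓ < -Real.log a := lt_neg.2 ((Real.log_lt_iff_lt_exp ha₀).2 ha)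
    calc C₁ * r ^ d = CΓ * r ^ d * (C₁ / CΓ) := by field_simp
      _ < CΓ * r ^ d * -Real.log a := by gcongr
  have integral_lt : ∫⁻ t in Ioo (a * r) r,
        μ {y | y ∈ G ∩ ball x r ∧ ε < β y t} / ENNReal.ofReal t <
      μ (Γ ∩ ball x r) * ENNReal.ofReal (Real.log (r / (a * r))) := by
    calc _ ≤ ENNReal.ofReal (C₁ * r ^ d) :=
          (lintegral_mono_set (Ioo_subset_Ioo_left (by positivity))).trans
            (carleson x (hΓG hx) r hr)
      _ < ENNReal.ofReal (CΓ * r ^ d * -Real.log a) :=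
          ENNReal.ofReal_lt_ofReal_iff'.2 ⟨mass_lt, mass_lt.trans_le' (by positivity)⟩
      _ = ENNReal.ofReal (CΓ * r ^ d) * ENNReal.ofReal (-Real.log a) :=
          ENNReal.ofReal_mul (by positivity)
      _ ≤ _ := by
          rw [log_eq]
          gcongr
          exact lower x hx r hr hr₀
  obtain ⟨y, hy, t, ht, hflat⟩ := exists_mem_notMem_of_lintegral_measure_div_lt
    (mul_pos ha₀ hr) (mul_le_of_le_one_left hr.le ha₁) integral_lt
  exact ⟨y, hy, t, ht.1, ht.2, not_lt.1 fun hβ ↦ hflat ⟨⟨hΓG hy.1, hy.2⟩, hβ⟩⟩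

/-- If the set of pairs `(y,t)` where the bilateral flatness of the Ahlfors-regular
set `G` exceeds `ε` satisfies a Carleson bound with constant `C₁`, and `Γ ⊆ G` is
lower Ahlfors-regular with constant `C_Γ`, then there is `a ∈ (0,1)` depending only
on `C₁` and `C_Γ` such that for all `x ∈ Γ` and `r ∈ (0, r₀/2)` there are
`y ∈ Γ ∩ B_r(x)` and `t ∈ (ar, r)` with `β(y,t) ≤ ε`. -/
theorem flat_ball_from_carleson (C₁ CΓ : ℝ) (hC₁ : 0 < C₁) (hCΓ : 0 < CΓ) :
    ∃ a : ℝ, 0 < a ∧ a < 1 ∧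
      ∀ (N : ℕ), 2 ≤ N →
      ∀ G : Set (EuclideanSpace ℝ (Fin N)), IsClosed G →
      ∀ CA : ℝ, 0 < CA →
      (∀ x ∈ G, ∀ r : ℝ, 0 < r →
        ENNReal.ofReal (CA⁻¹ * r ^ ((N:ℝ) - 1)) ≤ μH[(N:ℝ) - 1] (G ∩ ball x r) ∧
        μH[(N:ℝ) - 1] (G ∩ ball x r) ≤ ENNReal.ofReal (CA * r ^ ((N:ℝ) - 1))) →
      ∀ ε : ℝ, 0 < ε →
      (∀ x ∈ G, ∀ r : ℝ, 0 < r →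
        ∫⁻ t in Ioo (0:ℝ) r,
            (μH[(N:ℝ) - 1] {y | y ∈ G ∩ ball x r ∧ ε < bilateralFlatness G y t})
              / ENNReal.ofReal t
          ≤ ENNReal.ofReal (C₁ * r ^ ((N:ℝ) - 1))) →
      ∀ Γ : Set (EuclideanSpace ℝ (Fin N)), Γ ⊆ G →
      ∀ r₀ : ℝ, 0 < r₀ →
      (∀ x ∈ Γ, ∀ ρ : ℝ, 0 < ρ → ρ < r₀ →
        ENNReal.ofReal (CΓ * ρ ^ ((N:ℝ) - 1)) ≤ μH[(N:ℝ) - 1] (Γ ∩ ball x ρ)) →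
      ∀ x ∈ Γ, ∀ r : ℝ, 0 < r → r < r₀ / 2 →
      ∃ y ∈ Γ ∩ ball x r, ∃ t : ℝ, a * r < t ∧ t < r ∧
        bilateralFlatness G y t ≤ ε := by
  obtain ⟨a, ha₀, ha⟩ := exists_between (Real.exp_pos (-(C₁ / CΓ)))
  exact ⟨a, ha₀, ha.trans (Real.exp_lt_one_iff.2 (neg_lt_zero.2 (by positivity))),
    fun _ _ _ _ _ _ _ _ _ carleson _ hΓG _ _ lower _ hx _ hr hr₀ ↦
      flat_ball_from_carleson_general hC₁.le hCΓ ha₀ ha carleson hΓG lower hx hr (by linarith)⟩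
end

section
/- For every real C > 0 and every a ∈ (0, 2π), there exists ω ∈ (1/2, 1] such that −cos(2(a−π)ω) + (C+1)·cos(2πω) − C = 0. In particular, every zero of f(·, C) in (0, +∞) has a smallest representative ω₁ and ω₁ ≤ 1. -/
open scoped Real

/- At `ω = 1/2` the function `f(·, C)` equals `cos a - 1 - 2C < 0` and at `ω = 1` it is nonnegative,
so it vanishes somewhere in `(1/2, 1]`. It is analytic and not identically zero, so its zeros do not
accumulate at `0` from the right; hence the positive zeros form a closed set, which contains its
infimum. -/

open Filter Set Topology

theorem exists_isLeast_Ioi_inter_preimage {α β : Type*}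
    [ConditionallyCompleteLinearOrder α] [TopologicalSpace α] [OrderTopology α]
    [TopologicalSpace β] {f : α → β} {a : α} {s : Set β} (hf : ContinuousOn f (Ioi a))
    (hs : IsClosed s) (hnear : ∀ᶠ x in 𝓝[>] a, f x ∉ s) (hne : (Ioi a ∩ f ⁻¹' s).Nonempty) :
    ∃ m, IsLeast (Ioi a ∩ f ⁻¹' s) m := by
  have ⟨x, hax, _⟩ := hne
  obtain ⟨b, hab, hb⟩ := (mem_nhdsGT_iff_exists_Ioo_subset' hax).mp hnear
  have heq : Ioi a ∩ f ⁻¹' s = Ici b ∩ f ⁻¹' s := by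
    ext y
    exact ⟨fun ⟨hay, hy⟩ ↦ ⟨not_lt.mp fun hyb ↦ hb ⟨hay, hyb⟩ hy, hy⟩,
      fun ⟨hby, hy⟩ ↦ ⟨lt_of_lt_of_le hab hby, hy⟩⟩
  have hclosed : IsClosed (Ici b ∩ f ⁻¹' s) :=
    (hf.mono (Ici_subset_Ioi.mpr hab)).preimage_isClosed_of_isClosed isClosed_Ici hs
  rw [heq] at hne ⊢
  exact ⟨_, hclosed.isLeast_csInf hne (bddBelow_Ici.mono inter_subset_left)⟩

/-- The function `f(ω, C)` whose zeros in `ω` are studied, with the parameter `a` made explicit and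
`ω` placed last so that `transmissionDeterminant C a` is a function of `ω`. -/
noncomputable def transmissionDeterminant (C a ω : ℝ) : ℝ :=
  -Real.cos (2 * (a - π) * ω) + (C + 1) * Real.cos (2 * π * ω) - C

namespace transmissionDeterminant

theorem analyticAt (C a ω : ℝ) : AnalyticAt ℝ (transmissionDeterminant C a) ω := by
  unfold transmissionDeterminant
  fun_prop

theorem continuous (C a : ℝ) : Continuous (transmissionDeterminant C a) :=
  continuous_iff_continuousAt.mpr fun ω ↦ (analyticAt C a ω).continuousAt

theorem apply_half (C a : ℝ) : transmissionDeterminant C a (1 / 2) = Real.cos a - 1 - 2 * C := by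
  have hleft : 2 * (a - π) * (1 / 2) = a - π := by ring
  have hright : 2 * π * (1 / 2) = π := by ring
  rw [transmissionDeterminant, hleft, hright, Real.cos_sub_pi, Real.cos_pi]
  ring

theorem apply_one_nonneg (C a : ℝ) : 0 ≤ transmissionDeterminant C a 1 := by
  rw [transmissionDeterminant, mul_one, mul_one, Real.cos_two_pi]
  linarith [Real.cos_le_one (2 * (a - π))]

theorem apply_half_neg {C a : ℝ} (h : Real.cos a < 1 + 2 * C) :
    transmissionDeterminant C a (1 / 2) < 0 := by
  rw [apply_half]
  linarith

theorem exists_mem_Ioc_eq_zero {C a : ℝ} (h : Real.cos a < 1 + 2 * C) :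
    ∃ ω ∈ Ioc (1 / 2 : ℝ) 1, transmissionDeterminant C a ω = 0 :=
  intermediate_value_Ioc one_half_lt_one.le (continuous C a).continuousOn
    ⟨apply_half_neg h, apply_one_nonneg C a⟩

theorem eventually_ne_zero {C a : ℝ} (h : Real.cos a < 1 + 2 * C) (ω₀ : ℝ) :
    ∀ᶠ ω in 𝓝[≠] ω₀, transmissionDeterminant C a ω ≠ 0 := by
  by_contra hfreq
  have hzero : EqOn (transmissionDeterminant C a) 0 univ :=
    AnalyticOnNhd.eqOn_zero_of_preconnected_of_frequently_eq_zero (fun ω _ ↦ analyticAt C a ω)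
      isPreconnected_univ (mem_univ ω₀) hfreq
  exact (apply_half_neg h).ne (hzero (mem_univ _))

end transmissionDeterminant

open transmissionDeterminant in
theorem transmission_determinant_zero_in_half_one_general {C a : ℝ}
    (h : Real.cos a < 1 + 2 * C) :
    (∃ ω : ℝ, 1 / 2 < ω ∧ ω ≤ 1 ∧ transmissionDeterminant C a ω = 0) ∧
    ∃ ω₁ : ℝ, IsLeast {ω : ℝ | 0 < ω ∧ transmissionDeterminant C a ω = 0} ω₁ ∧ ω₁ ≤ 1 := by
  obtain ⟨ω, ⟨hhalf, hone⟩, hω⟩ := exists_mem_Ioc_eq_zero h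
  have hpos : 0 < ω := one_half_pos.trans hhalf
  obtain ⟨ω₁, hleast⟩ := exists_isLeast_Ioi_inter_preimage
    (continuous C a).continuousOn isClosed_singleton
    ((eventually_ne_zero h 0).filter_mono (nhdsGT_le_nhdsNE 0)) ⟨ω, hpos, hω⟩
  exact ⟨⟨ω, hhalf, hone, hω⟩, ω₁, hleast, (hleast.2 ⟨hpos, hω⟩).trans hone⟩

/-- For every `C > 0` and `a ∈ (0, 2π)`, the function
`f(ω) = −cos(2(a−π)ω) + (C+1)cos(2πω) − C` has a zero `ω ∈ (1/2, 1]`.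
In particular, the set of positive zeros of `f` has a least element `ω₁`,
and `ω₁ ≤ 1`. -/
theorem transmission_determinant_zero_in_half_one
    (C a : ℝ) (hC : 0 < C) (ha0 : 0 < a) (ha2 : a < 2 * π) :
    (∃ ω : ℝ, 1 / 2 < ω ∧ ω ≤ 1 ∧
      -Real.cos (2 * (a - π) * ω) + (C + 1) * Real.cos (2 * π * ω) - C = 0) ∧
    ∃ ω₁ : ℝ, IsLeast {ω : ℝ | 0 < ω ∧
        -Real.cos (2 * (a - π) * ω) + (C + 1) * Real.cos (2 * π * ω) - C = 0} ω₁ ∧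
      ω₁ ≤ 1 :=
  transmission_determinant_zero_in_half_one_general (by linarith [Real.cos_le_one a])
end

section
/- For all real numbers α, β, a, ω, the determinant of the 4×4 matrix A with rows R₁ = (1, 0, −cos(2πω), −sin(2πω)), R₂ = (cos(aω), sin(aω), −cos(aω), −sin(aω)), R₃ = (0, α, β sin(2πω), −β cos(2πω)), R₄ = (−α sin(aω), α cos(aω), β sin(aω), −β cos(aω)) equals ½(α−β)²·(cos(2πω) − cos(2(a−π)ω)) + 2αβ·(cos(2πω) − 1). Equivalently, when α ≠ β, det(A) = ½(α−β)²·[−cos(2(a−π)ω) + (C+1)cos(2πω) − C] with C = 4αβ/(α−β)². -/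
open scoped Real

/-- The coefficient matrix of the continuity/transmission system at the points `a`
and `2π` for the weighted Wirtinger eigenvalue problem on the circle, with unknowns
`(A₁, A₂, B₁, B₂)`. -/
noncomputable def transmissionMatrix (α β a ω : ℝ) : Matrix (Fin 4) (Fin 4) ℝ :=
  !![1, 0, -Real.cos (2 * π * ω), -Real.sin (2 * π * ω);
     Real.cos (a * ω), Real.sin (a * ω), -Real.cos (a * ω), -Real.sin (a * ω);
     0, α, β * Real.sin (2 * π * ω), -β * Real.cos (2 * π * ω);
     -α * Real.sin (a * ω), α * Real.cos (a * ω), β * Real.sin (a * ω),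
       -β * Real.cos (a * ω)]

/-!
Pairing the two conditions imposed at each point splits the system into `2 × 2` blocks, each of
which is, up to sign, the matrix of the Cauchy data of `cos (ω t)` and `sin (ω t)` at an end of one
of the two arcs. The determinant of a matrix of four `2 × 2` blocks depends only on the determinants
of the blocks and on the trace of one product of blocks and adjugates. Here that trace compares the
Cauchy data at the two ends of each arc, so it is the trace of the transfer matrix once around the
circle, up to the factor `α * β`.
-/

open Matrix

theorem adjugate_neg {R n : Type*} [CommRing R] [Fintype n] [DecidableEq n] (A : Matrix n n R) :
    (-A).adjugate = (-1 : R) ^ (Fintype.card n - 1) • A.adjugate := by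
  rw [← neg_one_smul R A, adjugate_smul]

theorem reindex_fromBlocks_fin_two {R : Type*} (A B C D : Matrix (Fin 2) (Fin 2) R) :
    reindex finSumFinEquiv finSumFinEquiv (fromBlocks A B C D) =
      !![A 0 0, A 0 1, B 0 0, B 0 1;
         A 1 0, A 1 1, B 1 0, B 1 1;
         C 0 0, C 0 1, D 0 0, D 0 1;
         C 1 0, C 1 1, D 1 0, D 1 1] := by
  ext i j
  fin_cases i <;> fin_cases j <;> rfl

/- For invertible `D` this is `det D` times the determinant of the Schur complement
`A - B * D⁻¹ * C`, expanded by `det (X - Y) = det X - trace (X.adjugate * Y) + det Y`. -/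
theorem det_fromBlocks_fin_two {R : Type*} [CommRing R] (A B C D : Matrix (Fin 2) (Fin 2) R) :
    (fromBlocks A B C D).det =
      A.det * D.det + B.det * C.det - (A.adjugate * B * D.adjugate * C).trace := by
  rw [← det_reindex_self finSumFinEquiv, reindex_fromBlocks_fin_two, det_succ_row_zero]
  simp only [trace_fin_two, mul_apply, Fin.sum_univ_two, det_fin_two, adjugate_fin_two]
  simp only [Fin.sum_univ_four, det_fin_three, submatrix_apply, Fin.succAbove, of_apply, cons_val,
    cons_val_one, Fin.reduceSucc, Fin.reduceCastSucc, Fin.reduceLT, Fin.coe_ofNat_eq_mod,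
    ↓reduceIte]
  ring

/-- The values of the Cauchy data `(u, σ u')` at `x` of the fundamental solutions `u = cos` (first
column) and `u = sin` (second column) of `u'' + u = 0`. The argument is the phase `x = ω t`, so the
flux `σ du/dt` is `ω` times the second row. -/
noncomputable def cauchyMatrix (σ x : ℝ) : Matrix (Fin 2) (Fin 2) ℝ :=
  !![Real.cos x, Real.sin x; -σ * Real.sin x, σ * Real.cos x]

/-- `σ` times the transfer matrix that carries the Cauchy data `(u, σ u')` of a solution of
`u'' + u = 0` at `x` to those at `x + θ`. The factor `σ` keeps the entries polynomial in `σ`. -/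
noncomputable def scaledTransferMatrix (σ θ : ℝ) : Matrix (Fin 2) (Fin 2) ℝ :=
  !![σ * Real.cos θ, Real.sin θ; -σ ^ 2 * Real.sin θ, σ * Real.cos θ]

theorem det_cauchyMatrix (σ x : ℝ) : (cauchyMatrix σ x).det = σ := by
  rw [cauchyMatrix, det_fin_two_of]
  linear_combination σ * Real.sin_sq_add_cos_sq x

theorem cauchyMatrix_mul_adjugate (σ x y : ℝ) :
    cauchyMatrix σ y * (cauchyMatrix σ x).adjugate = scaledTransferMatrix σ (y - x) := by
  simp only [cauchyMatrix, scaledTransferMatrix, adjugate_fin_two_of, mul_fin_two, Real.cos_sub,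
    Real.sin_sub]
  ext i j
  fin_cases i <;> fin_cases j <;>
    simp only [of_apply, cons_val', cons_val_zero, cons_val_one, cons_val_fin_one, Fin.zero_eta,
      Fin.mk_one] <;>
    ring

theorem trace_scaledTransferMatrix_mul (σ τ θ φ : ℝ) :
    (scaledTransferMatrix σ θ * scaledTransferMatrix τ φ).trace =
      2 * σ * τ * (Real.cos θ * Real.cos φ) - (σ ^ 2 + τ ^ 2) * (Real.sin θ * Real.sin φ) := by
  rw [scaledTransferMatrix, scaledTransferMatrix, mul_fin_two, trace_fin_two_of]
  ring

theorem det_fromBlocks_cauchyMatrix (σ τ x y z w : ℝ) :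
    (fromBlocks (cauchyMatrix σ x) (-cauchyMatrix τ w)
      (cauchyMatrix σ y) (-cauchyMatrix τ z)).det =
      2 * σ * τ - (scaledTransferMatrix σ (y - x) * scaledTransferMatrix τ (w - z)).trace := by
  have trace_eq : ((cauchyMatrix σ x).adjugate * -cauchyMatrix τ w *
      (-cauchyMatrix τ z).adjugate * cauchyMatrix σ y).trace =
      (scaledTransferMatrix σ (y - x) * scaledTransferMatrix τ (w - z)).trace := by
    rw [trace_mul_comm, ← cauchyMatrix_mul_adjugate, ← cauchyMatrix_mul_adjugate]
    simp [adjugate_neg, Matrix.mul_assoc]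
  rw [det_fromBlocks_fin_two, trace_eq]
  simp only [det_neg, det_cauchyMatrix, Fintype.card_fin]
  ring

theorem transmissionMatrix_submatrix_swap (α β a ω : ℝ) :
    (transmissionMatrix α β a ω).submatrix (Equiv.swap 1 2) id =
      reindex finSumFinEquiv finSumFinEquiv
        (fromBlocks (cauchyMatrix α 0) (-cauchyMatrix β (2 * π * ω))
          (cauchyMatrix α (a * ω)) (-cauchyMatrix β (a * ω))) := by
  rw [reindex_fromBlocks_fin_two]
  ext i j
  fin_cases i <;> fin_cases j <;>
    simp [transmissionMatrix, cauchyMatrix, Equiv.swap_apply_def]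

theorem det_transmissionMatrix_eq_trace (α β a ω : ℝ) :
    (transmissionMatrix α β a ω).det =
      (scaledTransferMatrix α (a * ω) * scaledTransferMatrix β (2 * π * ω - a * ω)).trace
        - 2 * α * β := by
  have det_swap := det_permute (Equiv.swap 1 2) (transmissionMatrix α β a ω)
  rw [transmissionMatrix_submatrix_swap, det_reindex_self, det_fromBlocks_cauchyMatrix,
    Equiv.Perm.sign_swap (by decide), sub_zero] at det_swap
  push_cast at det_swap
  linear_combination det_swap

/-- Explicit computation of the determinant of the transmission matrix:
`det A = ½(α−β)²(cos(2πω) − cos(2(a−π)ω)) + 2αβ(cos(2πω) − 1)`, and equivalently,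
when `α ≠ β`, `det A = ½(α−β)²[−cos(2(a−π)ω) + (C+1)cos(2πω) − C]` with
`C = 4αβ/(α−β)²`. -/
theorem transmission_matrix_det (α β a ω : ℝ) :
    (transmissionMatrix α β a ω).det
      = 1 / 2 * (α - β) ^ 2 * (Real.cos (2 * π * ω) - Real.cos (2 * (a - π) * ω))
        + 2 * α * β * (Real.cos (2 * π * ω) - 1) ∧
    (α ≠ β →
      (transmissionMatrix α β a ω).det
        = 1 / 2 * (α - β) ^ 2 *
            (-Real.cos (2 * (a - π) * ω)
              + (4 * α * β / (α - β) ^ 2 + 1) * Real.cos (2 * π * ω)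
              - 4 * α * β / (α - β) ^ 2)) := by
  have det_eq : (transmissionMatrix α β a ω).det
      = 1 / 2 * (α - β) ^ 2 * (Real.cos (2 * π * ω) - Real.cos (2 * (a - π) * ω))
        + 2 * α * β * (Real.cos (2 * π * ω) - 1) := by
    have cos_sum := Real.cos_add (a * ω) (2 * π * ω - a * ω)
    have cos_diff := Real.cos_sub (a * ω) (2 * π * ω - a * ω)
    rw [add_sub_cancel] at cos_sum
    rw [show a * ω - (2 * π * ω - a * ω) = 2 * (a - π) * ω by ring] at cos_diff
    rw [det_transmissionMatrix_eq_trace, trace_scaledTransferMatrix_mul, cos_sum, cos_diff]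
    ring
  refine ⟨det_eq, fun hne => ?_⟩
  have sub_ne : α - β ≠ 0 := sub_ne_zero.mpr hne
  rw [det_eq]
  field_simp
  ring
end

section
/- Let γ : [0,1] → ℝ² be a continuous curve with endpoints z = γ(0) and z′ = γ(1), with image Γ = γ([0,1]) satisfying ℋ¹(Γ) < ∞. Let Z := { t ∈ [0,1] : ∃ t′ ≠ t such that γ(t) = γ(t′) } and assume γ is almost injective in the sense that ℋ¹(γ(Z)) = 0. Then for every y ∈ Γ one has dist(y, [z, z′])² ≤ ℋ¹(Γ)·(ℋ¹(Γ) − |z′ − z|)/2, where dist(y, [z, z′]) denotes the distance from y to the segment joining z and z′. -/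
open MeasureTheory Metric Set
open scoped ENNReal

/-!
A point `t` cuts the curve into two arcs which, by almost injectivity, overlap in an `ℋ¹`-null set,
so their measures add up to `ℋ¹(Γ)`. A connected set is at least as long as the distance between any
two of its points, hence `|z - y| + |y - z'| ≤ ℋ¹(Γ)` for `y = γ(t)`: the point `y` lies in an
ellipse with foci `z` and `z'`, whose points are at distance at most the semi-minor axis
`√(ℋ¹(Γ)² - |z' - z|²) / 2` from the segment.
-/

section ImageUnion

variable {α X : Type*}

/-- The parameters in `s` at which `γ` takes a value that it takes again elsewhere in `s`; for
`s = [0,1]` this is the set `Z` of the informal statement. -/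
def multipleParams (γ : α → X) (s : Set α) : Set α :=
  {t ∈ s | ∃ t' ∈ s, t' ≠ t ∧ γ t = γ t'}

lemma image_inter_image_subset_image_multipleParams_union (γ : α → X) (s u : Set α) :
    γ '' s ∩ γ '' u ⊆ γ '' multipleParams γ (s ∪ u) ∪ γ '' (s ∩ u) := by
  rintro _ ⟨⟨t, hts, rfl⟩, t', ht'u, htt'⟩
  by_cases heq : t' = t
  · exact .inr ⟨t, ⟨hts, heq ▸ ht'u⟩, rfl⟩
  · exact .inl ⟨t, ⟨.inl hts, t', .inr ht'u, heq, htt'.symm⟩, rfl⟩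

lemma measure_image_union_of_multipleParams_null [MeasurableSpace X] {μ : Measure X} {γ : α → X}
    {s u : Set α} (hu : NullMeasurableSet (γ '' u) μ)
    (hγ : μ (γ '' multipleParams γ (s ∪ u)) = 0) (hsu : μ (γ '' (s ∩ u)) = 0) :
    μ (γ '' (s ∪ u)) = μ (γ '' s) + μ (γ '' u) := by
  have hdisj : AEDisjoint μ (γ '' s) (γ '' u) :=
    measure_mono_null (image_inter_image_subset_image_multipleParams_union γ s u)
      (measure_union_null hγ hsu)
  rw [image_union, measure_union₀ hu hdisj]

end ImageUnion

section HausdorffMeasure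

variable {X : Type*} [MetricSpace X] [MeasurableSpace X] [BorelSpace X]

lemma edist_le_hausdorffMeasure_of_isPreconnected {s : Set X} (hs : IsPreconnected s) {x y : X}
    (hx : x ∈ s) (hy : y ∈ s) : edist x y ≤ μH[1] s := by
  have hsub : Icc 0 (dist y x) ⊆ (dist · x) '' s :=
    (hs.image _ (by fun_prop)).Icc_subset ⟨x, hx, dist_self x⟩ ⟨y, hy, rfl⟩
  calc edist x y = μH[1] (Icc 0 (dist y x)) := by
        rw [hausdorffMeasure_real, Real.volume_Icc, sub_zero, edist_dist, dist_comm]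
    _ ≤ μH[1] ((dist · x) '' s) := measure_mono hsub
    _ ≤ μH[1] s := by
        simpa using
          (LipschitzWith.dist_left x).lipschitzOnWith.hausdorffMeasure_image_le zero_le_one

variable {α : Type*} [ConditionallyCompleteLinearOrder α] [TopologicalSpace α] [OrderTopology α]
  {γ : α → X} {a b t : α}

lemma hausdorffMeasure_image_Icc_eq_add {d : ℝ} (hd : 0 < d) (hγ : ContinuousOn γ (Icc a b))
    (hinj : μH[d] (γ '' multipleParams γ (Icc a b)) = 0) (ht : t ∈ Icc a b) :
    μH[d] (γ '' Icc a b) = μH[d] (γ '' Icc a t) + μH[d] (γ '' Icc t b) := by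
  have := Measure.nullSingletonClass_hausdorff X hd
  have hmeas : MeasurableSet (γ '' Icc t b) :=
    (isCompact_Icc.image_of_continuousOn (hγ.mono (Icc_subset_Icc_left ht.1))).measurableSet
  rw [← Icc_union_Icc_eq_Icc ht.1 ht.2] at hinj ⊢
  refine measure_image_union_of_multipleParams_null hmeas.nullMeasurableSet hinj ?_
  rw [Icc_inter_Icc_eq_singleton ht.1 ht.2, image_singleton, measure_singleton]

lemma edist_add_edist_le_hausdorffMeasure_image_Icc [DenselyOrdered α]
    (hγ : ContinuousOn γ (Icc a b)) (hinj : μH[1] (γ '' multipleParams γ (Icc a b)) = 0)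
    (ht : t ∈ Icc a b) :
    edist (γ a) (γ t) + edist (γ t) (γ b) ≤ μH[1] (γ '' Icc a b) := by
  have hleft : IsPreconnected (γ '' Icc a t) :=
    isPreconnected_Icc.image γ (hγ.mono (Icc_subset_Icc_right ht.2))
  have hright : IsPreconnected (γ '' Icc t b) :=
    isPreconnected_Icc.image γ (hγ.mono (Icc_subset_Icc_left ht.1))
  rw [hausdorffMeasure_image_Icc_eq_add one_pos hγ hinj ht]
  exact add_le_add
    (edist_le_hausdorffMeasure_of_isPreconnected hleft
      (mem_image_of_mem γ (left_mem_Icc.2 ht.1)) (mem_image_of_mem γ (right_mem_Icc.2 ht.1)))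
    (edist_le_hausdorffMeasure_of_isPreconnected hright
      (mem_image_of_mem γ (left_mem_Icc.2 ht.2)) (mem_image_of_mem γ (right_mem_Icc.2 ht.2)))

end HausdorffMeasure

section Ellipse

variable {E : Type*} [NormedAddCommGroup E] [InnerProductSpace ℝ E]

lemma dist_sq_lineMap {P : Type*} [MetricSpace P] [NormedAddTorsor E P] (y z w : P) (s : ℝ) :
    dist y (AffineMap.lineMap z w s) ^ 2
      = (1 - s) * dist z y ^ 2 + s * dist y w ^ 2 - s * (1 - s) * dist z w ^ 2 := by
  have hzw : z -ᵥ w = (y -ᵥ w) - (y -ᵥ z) := (vsub_sub_vsub_cancel_left z w y).symm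
  have hy : y -ᵥ AffineMap.lineMap z w s = (1 - s) • (y -ᵥ z) + s • (y -ᵥ w) := by
    rw [AffineMap.lineMap_apply, vsub_vadd_eq_vsub_sub, ← vsub_sub_vsub_cancel_left w z y]
    module
  rw [dist_comm z y]
  simp only [dist_eq_norm_vsub E, hy, hzw, norm_add_sq_real, norm_sub_sq_real (y -ᵥ w), norm_smul,
    mul_pow, Real.norm_eq_abs, sq_abs, real_inner_smul_left, real_inner_smul_right,
    real_inner_comm (y -ᵥ z)]
  ring

lemma infDist_segment_sq_le (y z w : E) :
    infDist y (segment ℝ z w) ^ 2 ≤ ((dist z y + dist y w) ^ 2 - dist z w ^ 2) / 4 := by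
  -- `lineMap z w s` is the foot of the bisector of the angle at `y`; when `z = y = w`, the
  -- convention `0 / 0 = 0` still gives `hz` and `hw`.
  set σ := dist z y + dist y w
  set s := dist z y / σ
  have hs₀ : 0 ≤ s := by positivity
  have hs₁ : s ≤ 1 := div_le_one_of_le₀ (le_add_of_nonneg_right dist_nonneg) (by positivity)
  have hz : dist z y = s * σ := by
    refine (div_mul_cancel_of_imp fun h ↦ ?_).symm
    linarith [dist_nonneg (x := z) (y := y), dist_nonneg (x := y) (y := w)]
  have hw : dist y w = (1 - s) * σ := by linarith
  have hmem : AffineMap.lineMap z w s ∈ segment ℝ z w :=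
    lineMap_mem_segment ℝ z w ⟨hs₀, hs₁⟩
  have htri : dist z w ≤ σ := dist_triangle z y w
  have hnonneg : 0 ≤ σ ^ 2 - dist z w ^ 2 := sub_nonneg.2 (by gcongr)
  calc infDist y (segment ℝ z w) ^ 2 ≤ dist y (AffineMap.lineMap z w s) ^ 2 := by
        gcongr
        · exact infDist_nonneg
        · exact infDist_le_dist_of_mem hmem
    _ = (1 - s) * (s * σ) ^ 2 + s * ((1 - s) * σ) ^ 2 - s * (1 - s) * dist z w ^ 2 := by
        rw [dist_sq_lineMap, ← hz, ← hw]
    _ = s * (1 - s) * (σ ^ 2 - dist z w ^ 2) := by ring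
    _ ≤ 1 / 4 * (σ ^ 2 - dist z w ^ 2) := by
        gcongr
        linarith [sq_nonneg (s - 1 / 2)]
    _ = (σ ^ 2 - dist z w ^ 2) / 4 := by ring

end Ellipse

theorem height_bound_almost_injective_curve_general {E α : Type*}
    [NormedAddCommGroup E] [InnerProductSpace ℝ E] [MeasurableSpace E] [BorelSpace E]
    [ConditionallyCompleteLinearOrder α] [TopologicalSpace α] [OrderTopology α] [DenselyOrdered α]
    {γ : α → E} {a b : α} (hγ : ContinuousOn γ (Icc a b)) (hfin : μH[1] (γ '' Icc a b) < ⊤)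
    (hinj : μH[1] (γ '' multipleParams γ (Icc a b)) = 0) {y : E} (hy : y ∈ γ '' Icc a b) :
    infDist y (segment ℝ (γ a) (γ b)) ^ 2
      ≤ ((μH[1] (γ '' Icc a b)).toReal ^ 2 - dist (γ b) (γ a) ^ 2) / 4 := by
  obtain ⟨t, ht, rfl⟩ := hy
  have hlen : dist (γ a) (γ t) + dist (γ t) (γ b) ≤ (μH[1] (γ '' Icc a b)).toReal := by
    rw [← ENNReal.ofReal_le_iff_le_toReal hfin.ne, ENNReal.ofReal_add dist_nonneg dist_nonneg,
      ← edist_dist, ← edist_dist]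
    exact edist_add_edist_le_hausdorffMeasure_image_Icc hγ hinj ht
  calc infDist (γ t) (segment ℝ (γ a) (γ b)) ^ 2
      ≤ ((dist (γ a) (γ t) + dist (γ t) (γ b)) ^ 2 - dist (γ a) (γ b) ^ 2) / 4 :=
        infDist_segment_sq_le (γ t) (γ a) (γ b)
    _ ≤ ((μH[1] (γ '' Icc a b)).toReal ^ 2 - dist (γ b) (γ a) ^ 2) / 4 := by
        rw [dist_comm (γ b)]; gcongr

/-- Height bound for an almost injective curve in the plane: if `γ : [0,1] → ℝ²` is
a continuous curve with image `Γ` of finite `ℋ¹` measure, whose set of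
self-intersection points has zero `ℋ¹` measure, then every point `y ∈ Γ` satisfies
`dist(y, [z, z'])² ≤ ℋ¹(Γ)(ℋ¹(Γ) − |z' − z|)/2`, where `z = γ(0)`, `z' = γ(1)`. -/
theorem height_bound_almost_injective_curve
    (γ : ℝ → EuclideanSpace ℝ (Fin 2)) (hγ : ContinuousOn γ (Icc 0 1))
    (hfin : μH[1] (γ '' Icc 0 1) < ⊤)
    (hinj : μH[1] (γ '' {t ∈ Icc (0:ℝ) 1 | ∃ t' ∈ Icc (0:ℝ) 1, t' ≠ t ∧ γ t = γ t'}) = 0)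
    (y : EuclideanSpace ℝ (Fin 2)) (hy : y ∈ γ '' Icc 0 1) :
    (infDist y (segment ℝ (γ 0) (γ 1))) ^ 2
      ≤ (μH[1] (γ '' Icc 0 1)).toReal *
          ((μH[1] (γ '' Icc 0 1)).toReal - dist (γ 1) (γ 0)) / 2 := by
  linarith [height_bound_almost_injective_curve_general hγ hfin hinj hy,
    sq_nonneg ((μH[1] (γ '' Icc 0 1)).toReal - dist (γ 1) (γ 0))]
end

section
/- Let B = B₁(0) ⊆ ℝ² be the unit ball and let A ⊆ B̄ with A ∩ ∂B ≠ ∅. Let 0 < η ≤ 1/2 and assume that for all z₁, z₂ ∈ A with z₁ ≠ z₂, the distance between the segment [z₁, z₂] and the diameter D of B parallel to [z₁, z₂] is at most η, where D = { t·(z₂−z₁)/|z₂−z₁| : t ∈ [−1, 1] } and the distance between the two sets is inf { |p − q| : p ∈ [z₁, z₂], q ∈ D }. Then, up to a rotation, A ⊆ { (x, y) ∈ ℝ² : |y| ≤ 3η }; that is, there exists a unit vector e ∈ ℝ² such that |⟨z, e⟩| ≤ 3η for every z ∈ A. -/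
open Metric Set
open scoped RealInnerProductSpace

/-!
Fix `p ∈ A` on the unit circle and let `z ∈ A`. Twice the area of the triangle with vertices `0`,
`p`, `z` is both `‖p‖ = 1` times the height of `z` over the line `ℝ p`, and `‖z - p‖ ≤ 2` times the
distance from `0` to the line through `p` and `z`. By flatness the latter distance is at most `η`,
so `z` lies within `2 * η` of `ℝ p`.
-/

section Projection

variable {𝕜 E : Type*} [RCLike 𝕜] [NormedAddCommGroup E] [InnerProductSpace 𝕜 E]

theorem norm_mul_norm_starProjection_span_singleton (u v : E) :
    ‖u‖ * ‖(𝕜 ∙ u).starProjection v‖ = ‖inner 𝕜 u v‖ := by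
  rcases eq_or_ne u 0 with rfl | hu
  · simp
  · rw [Submodule.starProjection_singleton, norm_smul, norm_div, RCLike.norm_ofReal, abs_sq]
    field_simp

/-- Both sides are the area of the parallelogram spanned by `u` and `v`, as base times height. -/
theorem norm_mul_norm_starProjection_orthogonal_comm (u v : E) :
    ‖u‖ * ‖(𝕜 ∙ u)ᗮ.starProjection v‖ = ‖v‖ * ‖(𝕜 ∙ v)ᗮ.starProjection u‖ := by
  have sq_area (x y : E) : (‖x‖ * ‖(𝕜 ∙ x)ᗮ.starProjection y‖) ^ 2 =
      ‖x‖ ^ 2 * ‖y‖ ^ 2 - ‖inner 𝕜 x y‖ ^ 2 := by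
    rw [← norm_mul_norm_starProjection_span_singleton,
      Submodule.norm_sq_eq_add_norm_sq_starProjection y (𝕜 ∙ x)]
    ring
  rw [← sq_eq_sq₀ (by positivity) (by positivity), sq_area, sq_area, norm_inner_symm, mul_comm]

theorem norm_inner_le_norm_starProjection_mul_norm {K : Submodule 𝕜 E} [K.HasOrthogonalProjection]
    {w : E} (hw : w ∈ K) (v : E) : ‖inner 𝕜 v w‖ ≤ ‖K.starProjection v‖ * ‖w‖ :=
  calc ‖inner 𝕜 v w‖ = ‖inner 𝕜 (K.starProjection v) w‖ := by
        rw [K.inner_starProjection_left_eq_right, Submodule.starProjection_eq_self_iff.mpr hw]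
    _ ≤ ‖K.starProjection v‖ * ‖w‖ := norm_inner_le_norm _ _

end Projection

section Strip

variable {E : Type*} [NormedAddCommGroup E] [InnerProductSpace ℝ E]

theorem norm_starProjection_orthogonal_le_dist {x y s q : E} (hs : s ∈ segment ℝ x y)
    (hq : q ∈ ℝ ∙ (y - x)) : ‖(ℝ ∙ (y - x))ᗮ.starProjection x‖ ≤ dist s q := by
  obtain ⟨θ, -, rfl⟩ := segment_eq_image' ℝ x y ▸ hs
  have hmem : θ • (y - x) - q ∈ ℝ ∙ (y - x) :=
    sub_mem (Submodule.smul_mem _ _ (Submodule.mem_span_singleton_self _)) hq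
  calc ‖(ℝ ∙ (y - x))ᗮ.starProjection x‖
      = ‖(ℝ ∙ (y - x))ᗮ.starProjection (x + (θ • (y - x) - q))‖ := by
        rw [map_add, Submodule.starProjection_orthogonal_apply_eq_zero hmem, add_zero]
    _ ≤ ‖x + (θ • (y - x) - q)‖ := Submodule.norm_starProjection_apply_le _ _
    _ = dist (x + θ • (y - x)) q := by rw [dist_eq_norm, add_sub_assoc]

theorem norm_starProjection_orthogonal_le_sInf_dist {x y : E} {D : Set E} (hD : D.Nonempty)
    (hDspan : D ⊆ ℝ ∙ (y - x)) :
    ‖(ℝ ∙ (y - x))ᗮ.starProjection x‖ ≤ sInf (image2 dist (segment ℝ x y) D) := by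
  refine le_csInf (.image2 ⟨x, left_mem_segment ℝ x y⟩ hD) ?_
  rintro _ ⟨s, hs, q, hq, rfl⟩
  exact norm_starProjection_orthogonal_le_dist hs (hDspan hq)

theorem norm_mul_norm_starProjection_orthogonal_le {p z : E} {D : Set E} (hD : D.Nonempty)
    (hDspan : D ⊆ ℝ ∙ (z - p)) :
    ‖p‖ * ‖(ℝ ∙ p)ᗮ.starProjection z‖ ≤ ‖z - p‖ * sInf (image2 dist (segment ℝ p z) D) :=
  calc ‖p‖ * ‖(ℝ ∙ p)ᗮ.starProjection z‖
      = ‖p‖ * ‖(ℝ ∙ p)ᗮ.starProjection (z - p)‖ := by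
        rw [map_sub, Submodule.starProjection_orthogonal_apply_eq_zero
          (Submodule.mem_span_singleton_self p), sub_zero]
    _ = ‖z - p‖ * ‖(ℝ ∙ (z - p))ᗮ.starProjection p‖ :=
        norm_mul_norm_starProjection_orthogonal_comm p (z - p)
    _ ≤ ‖z - p‖ * sInf (image2 dist (segment ℝ p z) D) := by
        gcongr
        exact norm_starProjection_orthogonal_le_sInf_dist hD hDspan

/-- The diameter of the unit ball parallel to `v`: the set `D` attached to `z₁` and `z₂` is
`parallelDiameter (z₂ - z₁)`. Since `0⁻¹ = 0`, it is `{0}` for `v = 0`. -/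
def parallelDiameter (v : E) : Set E :=
  (fun t : ℝ => t • (‖v‖⁻¹ • v)) '' Icc (-1 : ℝ) 1

theorem parallelDiameter_nonempty (v : E) : (parallelDiameter v).Nonempty :=
  (nonempty_Icc.mpr (by norm_num)).image _

theorem parallelDiameter_subset_span (v : E) : parallelDiameter v ⊆ ℝ ∙ v := by
  rintro _ ⟨t, -, rfl⟩
  exact Submodule.smul_mem _ _ (Submodule.smul_mem _ _ (Submodule.mem_span_singleton_self v))

theorem norm_starProjection_orthogonal_le_two_mul {p z : E} {η : ℝ} (hp : ‖p‖ = 1)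
    (hz : ‖z‖ ≤ 1) (hη : 0 ≤ η)
    (hflat : p ≠ z → sInf (image2 dist (segment ℝ p z) (parallelDiameter (z - p))) ≤ η) :
    ‖(ℝ ∙ p)ᗮ.starProjection z‖ ≤ 2 * η := by
  rcases eq_or_ne p z with rfl | hpz
  · rw [Submodule.starProjection_orthogonal_apply_eq_zero (Submodule.mem_span_singleton_self p),
      norm_zero]
    positivity
  have hzp : ‖z - p‖ ≤ 2 := by linarith [norm_sub_le z p]
  calc ‖(ℝ ∙ p)ᗮ.starProjection z‖ = ‖p‖ * ‖(ℝ ∙ p)ᗮ.starProjection z‖ := by rw [hp, one_mul]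
    _ ≤ ‖z - p‖ * _ := norm_mul_norm_starProjection_orthogonal_le
        (parallelDiameter_nonempty _) (parallelDiameter_subset_span _)
    _ ≤ ‖z - p‖ * η := by gcongr; exact hflat hpz
    _ ≤ 2 * η := by gcongr

theorem exists_norm_eq_one_mem_orthogonal_span_singleton (hE : 1 < Module.rank ℝ E) (p : E) :
    ∃ e ∈ (ℝ ∙ p)ᗮ, ‖e‖ = 1 := by
  have hne_top : ℝ ∙ p ≠ ⊤ := by
    intro htop
    have hrank : Module.rank ℝ (ℝ ∙ p) ≤ 1 := by simpa using rank_span_le (R := ℝ) {p}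
    rw [htop, rank_top] at hrank
    exact hE.not_ge hrank
  have : Nontrivial (ℝ ∙ p)ᗮ :=
    Submodule.nontrivial_iff_ne_bot.mpr (mt Submodule.orthogonal_eq_bot_iff.mp hne_top)
  obtain ⟨e, he⟩ := exists_norm_eq (ℝ ∙ p)ᗮ zero_le_one
  exact ⟨e, e.2, he⟩

theorem flat_set_in_strip_general (hE : 1 < Module.rank ℝ E) {A : Set E}
    (hA : A ⊆ closedBall 0 1) {p : E} (hp : ‖p‖ = 1) {η : ℝ} (hη : 0 ≤ η)
    (hflat : ∀ z ∈ A, p ≠ z →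
      sInf (image2 dist (segment ℝ p z) (parallelDiameter (z - p))) ≤ η) :
    ∃ e : E, ‖e‖ = 1 ∧ ∀ z ∈ A, |⟪z, e⟫| ≤ 2 * η := by
  obtain ⟨e, he, he_norm⟩ := exists_norm_eq_one_mem_orthogonal_span_singleton hE p
  refine ⟨e, he_norm, fun z hz => ?_⟩
  calc |⟪z, e⟫| ≤ ‖(ℝ ∙ p)ᗮ.starProjection z‖ * ‖e‖ :=
        norm_inner_le_norm_starProjection_mul_norm he z
    _ = ‖(ℝ ∙ p)ᗮ.starProjection z‖ := by rw [he_norm, mul_one]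
    _ ≤ 2 * η := norm_starProjection_orthogonal_le_two_mul hp
        (mem_closedBall_zero_iff.mp (hA hz)) hη (hflat z hz)

end Strip

/-- Geometric lemma: let `A` be a subset of the closed unit ball of `ℝ²` touching the
unit circle, and suppose that for all distinct `z₁, z₂ ∈ A` the segment `[z₁, z₂]`
is at distance at most `η ≤ 1/2` from the diameter `D` of the ball parallel to it.
Then, up to a rotation, `A` is contained in the horizontal strip of half-width `3η`:
there is a unit vector `e` with `|⟨z, e⟩| ≤ 3η` for all `z ∈ A`. -/
theorem flat_set_in_strip (A : Set (EuclideanSpace ℝ (Fin 2)))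
    (hA : A ⊆ closedBall 0 1) (hAsphere : (A ∩ sphere 0 1).Nonempty)
    (η : ℝ) (hη0 : 0 < η) (hη : η ≤ 1 / 2)
    (hflat : ∀ z₁ ∈ A, ∀ z₂ ∈ A, z₁ ≠ z₂ →
      sInf (Set.image2 dist (segment ℝ z₁ z₂)
        ((fun t : ℝ => t • (‖z₂ - z₁‖⁻¹ • (z₂ - z₁))) '' Icc (-1 : ℝ) 1)) ≤ η) :
    ∃ e : EuclideanSpace ℝ (Fin 2), ‖e‖ = 1 ∧ ∀ z ∈ A, |⟪z, e⟫| ≤ 3 * η := by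
  obtain ⟨p, hpA, hp⟩ := hAsphere
  have hrank : 1 < Module.rank ℝ (EuclideanSpace ℝ (Fin 2)) :=
    Module.one_lt_rank_of_one_lt_finrank (by simp)
  obtain ⟨e, he, hstrip⟩ := flat_set_in_strip_general hrank hA (mem_sphere_zero_iff_norm.mp hp)
    hη0.le (hflat p hpA)
  exact ⟨e, he, fun z hz => (hstrip z hz).trans (by gcongr; norm_num)⟩
end
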